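/- arXiv:1502.02070 — 2 statements merged into one kernel-verified Lean document; each statement's English description precedes it below -/
import Mathlib

section
/- Let G be a connected, non-complete strongly regular graph with parameters (v, k, λ, μ) with μ > 0. Set δ = √((λ−μ)^2 + 4(k−μ)), r = (λ−μ+δ)/2, Δ = ((v−1)(μ−λ) − 2k)/δ and f = (v−1+Δ)/2 (a natural number, the multiplicity of the eigenvalue r). Then there exists an injective map φ from the vertex set of G to the unit sphere of EuclideanSpace ℝ (Fin f) such that the inner product ⟪φ(u), φ(v)⟫ equals r/k whenever u and v are adjacent, and equals −(r+1)/(v−k−1) whenever u ≠ v are non-adjacent. -/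
open scoped Classical

/-!
Let `A` be the adjacency matrix, `J` the all-ones matrix and `s` the other root of
`x² - (λ - μ) x - (k - μ)`, so that `(A - r) (A - s) = μ J`. Since `J` vanishes on vectors of sum
zero, `E = (r - s)⁻¹ (A - s) (1 - v⁻¹ J)` is the orthogonal projection onto the `r`-eigenspace of
`A` there, and its trace is `f`; hence `E` is the Gram matrix of vectors in dimension `f`. An entry
`E u w` depends only on whether `u` and `w` are equal, adjacent or non-adjacent, so comparing the
diagonals in `A E = r E` and `(J - 1 - A) E = -(r + 1) E` gives the ratios of the three values.
-/

section Projections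

lemma sub_smul_one_mul_sub_smul_one {K R : Type*} [CommRing K] [Ring R] [Algebra K R]
    (a : R) (r s : K) :
    (a - r • 1) * (a - s • 1) = a ^ 2 - (r + s) • a + (r * s) • 1 := by
  simp only [sub_mul, mul_sub, smul_mul_assoc, mul_smul_comm, one_mul, mul_one, pow_two]
  module

lemma isIdempotentElem_inv_smul_sub_smul_one_mul {K R : Type*} [Field K] [Ring R] [Algebra K R]
    {a q : R} {r s : K} (hrs : r ≠ s) (hq : IsIdempotentElem q) (haq : Commute a q)
    (hroots : (a - r • 1) * (a - s • 1) * q = 0) :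
    IsIdempotentElem ((r - s)⁻¹ • ((a - s • 1) * q)) := by
  have hcomm : Commute (a - s • 1) q := haq.sub_left ((Commute.one_left q).smul_left s)
  have hsq : (a - s • 1) * q * ((a - s • 1) * q) = (r - s) • ((a - s • 1) * q) := calc
    _ = (a - s • 1) * (a - s • 1) * q := by
      rw [hcomm.symm.mul_mul_mul_comm, hq.eq]
    _ = (a - r • 1) * (a - s • 1) * q + (r - s) • ((a - s • 1) * q) := by
      simp only [sub_mul, sub_smul, smul_mul_assoc, one_mul]
      abel
    _ = _ := by rw [hroots, zero_add]
  rw [IsIdempotentElem, smul_mul_smul_comm, hsq, smul_smul, mul_assoc,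
    inv_mul_cancel₀ (sub_ne_zero.mpr hrs), mul_one]

lemma isIdempotentElem_toEuclideanLin {𝕜 ι : Type*} [RCLike 𝕜] [Fintype ι] [DecidableEq ι]
    {E : Matrix ι ι 𝕜} (hE : IsIdempotentElem E) : IsIdempotentElem E.toEuclideanLin := by
  ext x : 1
  simp [Matrix.toLpLin_apply, hE.eq]

lemma finrank_range_toEuclideanLin_of_isIdempotentElem {𝕜 ι : Type*} [RCLike 𝕜] [Fintype ι]
    [DecidableEq ι] {E : Matrix ι ι 𝕜} (hE : IsIdempotentElem E) :
    (Module.finrank 𝕜 (E.toEuclideanLin).range : 𝕜) = E.trace := by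
  have hproj := LinearMap.IsIdempotentElem.isProj_range _ (isIdempotentElem_toEuclideanLin hE)
  rw [← hproj.trace, Matrix.toEuclideanLin, Matrix.toLpLin_eq_toLin, Matrix.trace_toLin_eq]

lemma exists_inner_eq_of_isHermitian_of_isIdempotentElem {𝕜 ι : Type*} [RCLike 𝕜] [Fintype ι]
    {E : Matrix ι ι 𝕜} (hherm : E.IsHermitian) (hidem : IsIdempotentElem E) {f : ℕ}
    (htrace : E.trace = f) :
    ∃ φ : ι → EuclideanSpace 𝕜 (Fin f), ∀ u w, inner 𝕜 (φ u) (φ w) = E u w := by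
  have hrank : Module.finrank 𝕜 (E.toEuclideanLin).range = f := by
    exact_mod_cast (finrank_range_toEuclideanLin_of_isIdempotentElem hidem).trans htrace
  let b := (stdOrthonormalBasis 𝕜 (E.toEuclideanLin).range).reindex (finCongr hrank)
  refine ⟨fun u ↦ b.repr ⟨E.toEuclideanLin (EuclideanSpace.single u 1), ⟨_, rfl⟩⟩, fun u w ↦ ?_⟩
  rw [LinearIsometryEquiv.inner_map_map, Submodule.coe_inner,
    Matrix.isSymmetric_toEuclideanLin_iff.mpr hherm, ← Module.End.mul_apply,
    (isIdempotentElem_toEuclideanLin hidem).eq, EuclideanSpace.inner_single_left]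
  simp [Matrix.toLpLin_apply]

lemma exists_inner_eq_div_of_isSymm_of_isIdempotentElem {ι : Type*} [Fintype ι]
    {E : Matrix ι ι ℝ} (hsymm : E.IsSymm) (hidem : IsIdempotentElem E) {f : ℕ}
    (htrace : E.trace = f) {d : ℝ} (hdiag : ∀ u, E u u = d) :
    ∃ φ : ι → EuclideanSpace ℝ (Fin f), ∀ u w, inner ℝ (φ u) (φ w) = E u w / d := by
  obtain ⟨ψ, hψ⟩ := exists_inner_eq_of_isHermitian_of_isIdempotentElem
    (E.conjTranspose_eq_transpose_of_trivial.trans hsymm) hidem htrace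
  refine ⟨fun u ↦ (√d)⁻¹ • ψ u, fun u w ↦ ?_⟩
  have hd : 0 ≤ d := by
    rw [← hdiag u, ← hψ]
    exact real_inner_self_nonneg
  rw [real_inner_smul_left, real_inner_smul_right, hψ, ← mul_assoc, ← mul_inv,
    Real.mul_self_sqrt hd, inv_mul_eq_div]

end Projections

section Centering

variable {V K : Type*} [Fintype V] [DecidableEq V] [Field K]

variable (V K) in
/-- The centering matrix `1 - v⁻¹ J`: the projection of `V → K` onto the vectors of sum zero along
the constant vectors (if `v = 0` in `K`, then `v⁻¹ = 0` and this is the identity matrix). -/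
def centeringMatrix : Matrix V V K :=
  1 - (Fintype.card V : K)⁻¹ • Matrix.of 1

variable [CharZero K]

lemma of_one_mul_centeringMatrix : (Matrix.of 1 : Matrix V V K) * centeringMatrix V K = 0 := by
  ext u w
  have : Nonempty V := ⟨u⟩
  simp [centeringMatrix, mul_sub, Matrix.mul_apply, Matrix.one_apply]

variable (V K) in
lemma isIdempotentElem_centeringMatrix : IsIdempotentElem (centeringMatrix V K) := by
  rw [IsIdempotentElem]
  nth_rw 1 [centeringMatrix]
  rw [sub_mul, one_mul, smul_mul_assoc, of_one_mul_centeringMatrix, smul_zero, sub_zero]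

end Centering

section RegularGraph

lemma adjMatrix_compl_eq_of_one_sub_one_sub {V R : Type*} [DecidableEq V] [Ring R]
    {G : SimpleGraph V} [DecidableRel G.Adj] :
    Gᶜ.adjMatrix R = Matrix.of 1 - 1 - G.adjMatrix R := by
  rw [← SimpleGraph.compl_adjMatrix_eq_adjMatrix_compl,
    ← G.one_add_adjMatrix_add_compl_adjMatrix_eq_of_one R]
  abel

variable {V R : Type*} [Fintype V] {G : SimpleGraph V} [DecidableRel G.Adj] {k : ℕ}

lemma adjMatrix_mul_of_one [NonAssocSemiring R] (hG : G.IsRegularOfDegree k) :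
    G.adjMatrix R * Matrix.of 1 = (k : R) • Matrix.of 1 := by
  ext u w
  simp [SimpleGraph.adjMatrix_mul_apply, hG.degree_eq]

lemma of_one_mul_adjMatrix [NonAssocSemiring R] (hG : G.IsRegularOfDegree k) :
    Matrix.of 1 * G.adjMatrix R = (k : R) • Matrix.of 1 := by
  ext u w
  simp [SimpleGraph.mul_adjMatrix_apply, hG.degree_eq]

lemma commute_adjMatrix_centeringMatrix [DecidableEq V] [Field R] (hG : G.IsRegularOfDegree k) :
    Commute (G.adjMatrix R) (centeringMatrix V R) := by
  refine (Commute.one_right _).sub_right (Commute.smul_right ?_ _)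
  rw [Commute, SemiconjBy, adjMatrix_mul_of_one hG, of_one_mul_adjMatrix hG]

lemma degree_mul_apply_of_adjMatrix_mul_eq_smul [NonAssocSemiring R]
    (hG : G.IsRegularOfDegree k) {M : Matrix V V R} {r : R} (hM : G.adjMatrix R * M = r • M)
    {u w : V} (hconst : ∀ x, G.Adj u x → M x u = M w u) :
    k * M w u = r * M u u := calc
  k * M w u = ∑ _x ∈ G.neighborFinset u, M w u := by simp [hG.degree_eq]
  _ = ∑ x ∈ G.neighborFinset u, M x u :=
    Finset.sum_congr rfl fun x hx ↦ (hconst x ((G.mem_neighborFinset u x).mp hx)).symm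
  _ = r * M u u := by
    rw [← SimpleGraph.adjMatrix_mul_apply, hM, Matrix.smul_apply, smul_eq_mul]

lemma adjMatrix_compl_mul_eq_smul [DecidableEq V] [CommRing R] {M : Matrix V V R} {r : R}
    (hM : G.adjMatrix R * M = r • M) (hones : Matrix.of 1 * M = 0) :
    Gᶜ.adjMatrix R * M = (-(r + 1)) • M := by
  rw [adjMatrix_compl_eq_of_one_sub_one_sub, sub_mul, sub_mul, one_mul, hones, hM]
  module

lemma degree_add_one_lt_card_of_ne_top (hG : G.IsRegularOfDegree k) (hnc : G ≠ ⊤) :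
    k + 1 < Fintype.card V := by
  obtain ⟨u, w, hne, hnadj⟩ := SimpleGraph.ne_top_iff_exists_not_adj.mp hnc
  have hpos : 0 < Gᶜ.degree u :=
    (Gᶜ.degree_pos_iff_exists_adj u).mpr ⟨w, (G.compl_adj u w).mpr ⟨hne, hnadj⟩⟩
  rw [hG.compl.degree_eq u] at hpos
  lia

end RegularGraph

section Eigenprojection

variable {V K : Type*} [Fintype V] [DecidableEq V] [Field K]
  {G : SimpleGraph V} [DecidableRel G.Adj] {k : ℕ} {r s c : K}

variable (G) in
/-- The matrix `(r - s)⁻¹ (A - s) (1 - v⁻¹ J)`, where `A` is the adjacency matrix of `G`. If `G` is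
regular and `r ≠ s` are the eigenvalues of `A` on the vectors of sum zero, this is the projection
onto the `r`-eigenspace in that hyperplane. -/
def eigenprojection (r s : K) : Matrix V V K :=
  (r - s)⁻¹ • ((G.adjMatrix K - s • 1) * centeringMatrix V K)

lemma eigenprojection_apply (hG : G.IsRegularOfDegree k) (u w : V) :
    eigenprojection G r s u w =
      (r - s)⁻¹ * (G.adjMatrix K u w - s * (1 : Matrix V V K) u w - (k - s) / Fintype.card V) := by
  have hexpand : (G.adjMatrix K - s • 1) * centeringMatrix V K =
      G.adjMatrix K - s • 1 - ((k - s) / Fintype.card V) • Matrix.of 1 := by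
    rw [centeringMatrix, mul_sub, mul_one, mul_smul_comm, sub_mul, adjMatrix_mul_of_one hG,
      smul_mul_assoc, one_mul, ← sub_smul, smul_smul, inv_mul_eq_div]
  simp [eigenprojection, hexpand]

lemma isSymm_eigenprojection (hG : G.IsRegularOfDegree k) : (eigenprojection G r s).IsSymm := by
  ext u w
  rw [Matrix.transpose_apply, eigenprojection_apply hG, eigenprojection_apply hG,
    G.isSymm_adjMatrix.apply, Matrix.isSymm_one.apply]

lemma eigenprojection_apply_self (hG : G.IsRegularOfDegree k) (u : V) :
    eigenprojection G r s u u = (r - s)⁻¹ * (-s - (k - s) / Fintype.card V) := by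
  simp [eigenprojection_apply hG]

variable [CharZero K]

lemma trace_eigenprojection [Nonempty V] (hG : G.IsRegularOfDegree k) :
    (eigenprojection G r s).trace = (-s * (Fintype.card V - 1) - k) / (r - s) := by
  simp only [Matrix.trace, Matrix.diag_apply, eigenprojection_apply_self hG, Finset.sum_const,
    Finset.card_univ, nsmul_eq_mul]
  field_simp
  ring

lemma trace_eigenprojection_eq_half [Nonempty V] (hG : G.IsRegularOfDegree k) (hrs : r ≠ s) :
    (eigenprojection G r s).trace =
      (Fintype.card V - 1 + ((Fintype.card V - 1) * -(r + s) - 2 * k) / (r - s)) / 2 := by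
  have hdiff : r - s ≠ 0 := sub_ne_zero.mpr hrs
  rw [trace_eigenprojection hG]
  field_simp
  ring

lemma of_one_mul_eigenprojection (hG : G.IsRegularOfDegree k) :
    Matrix.of 1 * eigenprojection G r s = 0 := by
  rw [eigenprojection, mul_smul_comm, ← mul_assoc, mul_sub, of_one_mul_adjMatrix hG,
    mul_smul_comm, mul_one, ← sub_smul, smul_mul_assoc, of_one_mul_centeringMatrix, smul_zero,
    smul_zero]

lemma adjMatrix_roots_mul_centeringMatrix
    (hroots : (G.adjMatrix K - r • 1) * (G.adjMatrix K - s • 1) = c • Matrix.of 1) :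
    (G.adjMatrix K - r • 1) * (G.adjMatrix K - s • 1) * centeringMatrix V K = 0 := by
  rw [hroots, smul_mul_assoc, of_one_mul_centeringMatrix, smul_zero]

lemma isIdempotentElem_eigenprojection (hG : G.IsRegularOfDegree k) (hrs : r ≠ s)
    (hroots : (G.adjMatrix K - r • 1) * (G.adjMatrix K - s • 1) = c • Matrix.of 1) :
    IsIdempotentElem (eigenprojection G r s) :=
  isIdempotentElem_inv_smul_sub_smul_one_mul hrs (isIdempotentElem_centeringMatrix V K)
    (commute_adjMatrix_centeringMatrix hG) (adjMatrix_roots_mul_centeringMatrix hroots)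

lemma adjMatrix_mul_eigenprojection
    (hroots : (G.adjMatrix K - r • 1) * (G.adjMatrix K - s • 1) = c • Matrix.of 1) :
    G.adjMatrix K * eigenprojection G r s = r • eigenprojection G r s := by
  have hzero := adjMatrix_roots_mul_centeringMatrix hroots
  rw [mul_assoc, sub_mul, smul_mul_assoc, one_mul, sub_eq_zero] at hzero
  rw [eigenprojection, mul_smul_comm, hzero, smul_comm]

lemma degree_mul_eigenprojection_apply_of_adj (hG : G.IsRegularOfDegree k)
    (hroots : (G.adjMatrix K - r • 1) * (G.adjMatrix K - s • 1) = c • Matrix.of 1)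
    {u w : V} (huw : G.Adj u w) :
    k * eigenprojection G r s u w = r * eigenprojection G r s u u := by
  have hconst (x : V) (hux : G.Adj u x) :
      eigenprojection G r s x u = eigenprojection G r s w u := by
    simp [eigenprojection_apply hG, hux.symm, huw.symm, hux.ne', huw.ne']
  rw [← (isSymm_eigenprojection hG).apply u w]
  exact degree_mul_apply_of_adjMatrix_mul_eq_smul hG (adjMatrix_mul_eigenprojection hroots) hconst

lemma card_sub_degree_sub_one_mul_eigenprojection_apply_of_not_adj (hG : G.IsRegularOfDegree k)
    (hroots : (G.adjMatrix K - r • 1) * (G.adjMatrix K - s • 1) = c • Matrix.of 1)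
    {u w : V} (hne : u ≠ w) (huw : ¬G.Adj u w) :
    (Fintype.card V - k - 1) * eigenprojection G r s u w =
      -(r + 1) * eigenprojection G r s u u := by
  have hconst (x : V) (hux : Gᶜ.Adj u x) :
      eigenprojection G r s x u = eigenprojection G r s w u := by
    obtain ⟨hnex, hnadj⟩ := (G.compl_adj u x).mp hux
    simp [eigenprojection_apply hG, G.adj_comm _ u, hnadj, huw, hnex.symm, hne.symm]
  have hcard : ((Fintype.card V - 1 - k : ℕ) : K) = Fintype.card V - k - 1 := by
    have hlt : k < Fintype.card V := hG.degree_eq u ▸ G.degree_lt_card_verts u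
    rw [Nat.sub_sub, Nat.cast_sub (by lia)]
    push_cast
    ring
  rw [← (isSymm_eigenprojection hG).apply u w, ← hcard]
  exact degree_mul_apply_of_adjMatrix_mul_eq_smul hG.compl (adjMatrix_compl_mul_eq_smul
    (adjMatrix_mul_eigenprojection hroots) (of_one_mul_eigenprojection hG)) hconst

/- If the diagonal vanished, the relations above would make all entries vanish, yet entries at
adjacent and at non-adjacent pairs differ by `(r - s)⁻¹`. -/
lemma eigenprojection_apply_self_ne_zero (hG : G.IsRegularOfDegree k) (hk : k ≠ 0) (hnc : G ≠ ⊤)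
    (hrs : r ≠ s)
    (hroots : (G.adjMatrix K - r • 1) * (G.adjMatrix K - s • 1) = c • Matrix.of 1) (u : V) :
    eigenprojection G r s u u ≠ 0 := by
  intro hdiag
  obtain ⟨x, z, hne, hxz⟩ := SimpleGraph.ne_top_iff_exists_not_adj.mp hnc
  obtain ⟨y, hxy⟩ := (G.degree_pos_iff_exists_adj x).mp (hG.degree_eq x ▸ hk.pos)
  have hdiag_x : eigenprojection G r s x x = 0 := by
    rw [eigenprojection_apply_self hG, ← hdiag, eigenprojection_apply_self hG]
  have hadj : eigenprojection G r s x y = 0 := by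
    simpa [hdiag_x, hk] using degree_mul_eigenprojection_apply_of_adj hG hroots hxy
  have hnadj : eigenprojection G r s x z = 0 := by
    have hcard : (Fintype.card V - k - 1 : K) ≠ 0 := by
      rw [sub_sub, sub_ne_zero]
      exact_mod_cast (degree_add_one_lt_card_of_ne_top hG hnc).ne'
    simpa [hdiag_x, hcard] using
      card_sub_degree_sub_one_mul_eigenprojection_apply_of_not_adj hG hroots hne hxz
  have hdiff : eigenprojection G r s x y - eigenprojection G r s x z = (r - s)⁻¹ := by
    simp only [eigenprojection_apply hG, SimpleGraph.adjMatrix_apply, hxy, hxz, if_true, if_false,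
      Matrix.one_apply_ne hxy.ne, Matrix.one_apply_ne hne]
    ring
  rw [hadj, hnadj, sub_zero] at hdiff
  exact inv_ne_zero (sub_ne_zero.mpr hrs) hdiff.symm

end Eigenprojection

section SphericalRepresentation

lemma injective_of_inner_eq_of_ne_one {V E : Type*} [NormedAddCommGroup E]
    [InnerProductSpace ℝ E] {G : SimpleGraph V} {φ : V → E} {α β : ℝ} (hunit : ∀ u, ‖φ u‖ = 1)
    (hadj : ∀ u w, G.Adj u w → inner ℝ (φ u) (φ w) = α)
    (hnadj : ∀ u w, u ≠ w → ¬G.Adj u w → inner ℝ (φ u) (φ w) = β) (hα : α ≠ 1) (hβ : β ≠ 1) :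
    Function.Injective φ := by
  intro u w huw
  have hone := (inner_eq_one_iff_of_norm_eq_one (𝕜 := ℝ) (hunit u) (hunit w)).mpr huw
  by_contra hne
  by_cases h : G.Adj u w
  · exact hα ((hadj u w h).symm.trans hone)
  · exact hβ ((hnadj u w hne h).symm.trans hone)

theorem exists_unit_vectors_of_adjMatrix_roots {V : Type*} [Fintype V] [DecidableEq V]
    {G : SimpleGraph V} [DecidableRel G.Adj] {k f : ℕ} {r s c : ℝ}
    (hG : G.IsRegularOfDegree k) (hk : k ≠ 0) (hnc : G ≠ ⊤) (hrs : r ≠ s)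
    (hroots : (G.adjMatrix ℝ - r • 1) * (G.adjMatrix ℝ - s • 1) = c • Matrix.of 1)
    (htrace : (eigenprojection G r s).trace = f) :
    ∃ φ : V → EuclideanSpace ℝ (Fin f),
      (∀ u, ‖φ u‖ = 1) ∧
      (∀ u w, G.Adj u w → inner ℝ (φ u) (φ w) = r / k) ∧
      (∀ u w, u ≠ w → ¬G.Adj u w →
        inner ℝ (φ u) (φ w) = -(r + 1) / (Fintype.card V - k - 1)) := by
  have hdiag := eigenprojection_apply_self (r := r) (s := s) hG
  have hdiag_ne := eigenprojection_apply_self_ne_zero hG hk hnc hrs hroots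
  have hk' : (k : ℝ) ≠ 0 := Nat.cast_ne_zero.mpr hk
  have hcard : (Fintype.card V - k - 1 : ℝ) ≠ 0 := by
    rw [sub_sub, sub_ne_zero]
    exact_mod_cast (degree_add_one_lt_card_of_ne_top hG hnc).ne'
  obtain ⟨φ, hφ⟩ := exists_inner_eq_div_of_isSymm_of_isIdempotentElem (isSymm_eigenprojection hG)
    (isIdempotentElem_eigenprojection hG hrs hroots) htrace hdiag
  refine ⟨φ, fun u ↦ ?_, fun u w huw ↦ ?_, fun u w hne huw ↦ ?_⟩
  · rw [norm_eq_sqrt_real_inner, hφ, ← hdiag u, div_self (hdiag_ne u), Real.sqrt_one]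
  · rw [hφ, ← hdiag u, div_eq_div_iff (hdiag_ne u) hk', mul_comm]
    exact degree_mul_eigenprojection_apply_of_adj hG hroots huw
  · rw [hφ, ← hdiag u, div_eq_div_iff (hdiag_ne u) hcard, mul_comm]
    exact card_sub_degree_sub_one_mul_eigenprojection_apply_of_not_adj hG hroots hne huw

end SphericalRepresentation

section StronglyRegular

variable {V : Type*} [Fintype V] {G : SimpleGraph V} [DecidableRel G.Adj] {v k ℓ μ : ℕ}

lemma adjMatrix_roots_of_isSRGWith [DecidableEq V] {R : Type*} [CommRing R] {r s : R}
    (hG : G.IsSRGWith v k ℓ μ) (hsum : r + s = ℓ - μ) (hprod : r * s = μ - k) :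
    (G.adjMatrix R - r • 1) * (G.adjMatrix R - s • 1) = (μ : R) • Matrix.of 1 := by
  rw [sub_smul_one_mul_sub_smul_one, hsum, hprod, hG.matrix_eq,
    adjMatrix_compl_eq_of_one_sub_one_sub]
  module

lemma mu_le_degree_of_isSRGWith (hG : G.IsSRGWith v k ℓ μ) (hnc : G ≠ ⊤) : μ ≤ k := by
  obtain ⟨u, w, hne, hnadj⟩ := SimpleGraph.ne_top_iff_exists_not_adj.mp hnc
  rw [← hG.of_not_adj hne hnadj, ← hG.regular u]
  exact G.card_commonNeighbors_le_degree_left u w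

lemma lambda_lt_degree_of_isSRGWith [Nonempty V] (hG : G.IsSRGWith v k ℓ μ) (hk : 0 < k) :
    ℓ < k := by
  obtain ⟨u⟩ := ‹Nonempty V›
  obtain ⟨w, huw⟩ := (G.degree_pos_iff_exists_adj u).mp (hG.regular.degree_eq u ▸ hk)
  rw [← hG.of_adj u w huw, ← hG.regular u]
  exact huw.card_commonNeighbors_lt_degree

end StronglyRegular

section Eigenvalues

variable {k ℓ μ r s : ℝ}

lemma discriminant_pos (hμk : μ ≤ k) (hℓk : ℓ < k) : 0 < (ℓ - μ) ^ 2 + 4 * (k - μ) := by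
  rcases hμk.eq_or_lt with rfl | hlt
  · nlinarith
  · nlinarith [sq_nonneg (ℓ - μ)]

lemma exists_conjugate_root {a b δ r : ℝ} (hdisc : 0 ≤ a ^ 2 + 4 * b)
    (hδ : δ = √(a ^ 2 + 4 * b)) (hr : r = (a + δ) / 2) :
    ∃ s, r + s = a ∧ r * s = -b ∧ r - s = δ := by
  have hδ_sq : δ ^ 2 = a ^ 2 + 4 * b := hδ ▸ Real.sq_sqrt hdisc
  refine ⟨(a - δ) / 2, ?_, ?_, ?_⟩ <;> rw [hr]
  · ring
  · linear_combination (-1 / 4) * hδ_sq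
  · ring

lemma larger_root_nonneg (hμk : μ ≤ k) (hprod : r * s = μ - k) (hsr : s < r) : 0 ≤ r := by
  by_contra! hr
  nlinarith [mul_pos_of_neg_of_neg hr (hsr.trans hr)]

lemma root_ne_degree (hk : 0 < k) (hμ : 0 < μ) (hℓk : ℓ + 1 ≤ k) (hsum : r + s = ℓ - μ)
    (hprod : r * s = μ - k) : r ≠ k := by
  rintro rfl
  have hvanish : r * (r - ℓ - 1) + (r + 1) * μ = 0 := by linear_combination r * hsum - hprod
  nlinarith [mul_nonneg hk.le (sub_nonneg.mpr hℓk), mul_pos hk hμ]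

end Eigenvalues

/-- A connected non-complete strongly regular graph with parameters
`(v, k, λ, μ)`, `μ > 0`, admits a spherical two-distance representation: an
injective map of its vertices to unit vectors of `EuclideanSpace ℝ (Fin f)`,
where `f = (v-1+Δ)/2` is the multiplicity of the eigenvalue `r`, with inner
product `r/k` on adjacent pairs and `-(r+1)/(v-k-1)` on distinct non-adjacent
pairs. -/
theorem srg_spherical_two_distance_representation {V : Type*} [Fintype V]
    (G : SimpleGraph V) (v k ℓ μ : ℕ)
    (hSRG : G.IsSRGWith v k ℓ μ) (hconn : G.Connected) (hnc : G ≠ ⊤) (hμ : 0 < μ)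
    (δ r Δ : ℝ) (f : ℕ)
    (hδ : δ = Real.sqrt (((ℓ : ℝ) - μ) ^ 2 + 4 * ((k : ℝ) - μ)))
    (hr : r = (((ℓ : ℝ) - μ) + δ) / 2)
    (hΔ : Δ = (((v : ℝ) - 1) * ((μ : ℝ) - ℓ) - 2 * k) / δ)
    (hf : (f : ℝ) = ((v : ℝ) - 1 + Δ) / 2) :
    ∃ φ : V → EuclideanSpace ℝ (Fin f),
      Function.Injective φ ∧
      (∀ u, ‖φ u‖ = 1) ∧
      (∀ u w, G.Adj u w → (inner ℝ (φ u) (φ w) : ℝ) = r / k) ∧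
      (∀ u w, u ≠ w → ¬G.Adj u w →
        (inner ℝ (φ u) (φ w) : ℝ) = -(r + 1) / ((v : ℝ) - k - 1)) := by
  have : Nonempty V := hconn.nonempty
  obtain rfl : Fintype.card V = v := hSRG.card
  have hμk := mu_le_degree_of_isSRGWith hSRG hnc
  have hk : 0 < k := hμ.trans_le hμk
  have hℓk := lambda_lt_degree_of_isSRGWith hSRG hk
  have hkv := degree_add_one_lt_card_of_ne_top hSRG.regular hnc
  rify at hμk hkv
  have hdisc := discriminant_pos hμk (Nat.cast_lt.mpr hℓk)
  have hδ_pos : 0 < δ := hδ ▸ Real.sqrt_pos.mpr hdisc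
  obtain ⟨s, hsum, hprod, hdiff⟩ := exists_conjugate_root hdisc.le hδ hr
  rw [neg_sub] at hprod
  have hsr : s < r := by linarith
  have htrace : (eigenprojection G r s).trace = f := by
    rw [trace_eigenprojection_eq_half hSRG.regular hsr.ne', hsum, hdiff, neg_sub, hf, hΔ]
  obtain ⟨φ, hunit, hadj, hnadj⟩ := exists_unit_vectors_of_adjMatrix_roots hSRG.regular hk.ne' hnc
    hsr.ne' (adjMatrix_roots_of_isSRGWith hSRG hsum hprod) htrace
  have hα : r / k ≠ 1 := div_ne_one_of_ne <|
    root_ne_degree (by positivity) (by positivity) (mod_cast hℓk) hsum hprod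
  have hβ : -(r + 1) / ((Fintype.card V : ℝ) - k - 1) < 0 :=
    div_neg_of_neg_of_pos (by linarith [larger_root_nonneg hμk hprod hsr]) (by linarith)
  have hinj := injective_of_inner_eq_of_ne_one hunit hadj hnadj hα (hβ.trans one_pos).ne
  exact ⟨φ, hinj, hunit, hadj, hnadj⟩
end

section
/- Let G be a connected, non-complete strongly regular graph with parameters (v, k, λ, μ) with μ > 0, and set δ = √((λ−μ)^2 + 4(k−μ)), r = (λ−μ+δ)/2, Δ = ((v−1)(μ−λ) − 2k)/δ and f = (v−1+Δ)/2. Then there exists an injective map ψ from the vertex set of G to EuclideanSpace ℝ (Fin f) such that dist(ψ(u), ψ(v)) ≥ 1 for all u ≠ v, with equality exactly when u and v are adjacent; that is, G is the tangency graph of a unit ball packing in dimension f. -/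
open scoped Classical

/-!
On the orthogonal complement of the all-ones vector the adjacency matrix `A` of a strongly regular
graph has exactly two eigenvalues `s < r`, and `(A - r) * (A - s) = μ J`, where `J` is the all-ones
matrix. Hence `A - s` with its all-ones direction removed is `r - s` times the orthogonal
projection onto the `r`-eigenspace. As such it is a Gram matrix of vectors in dimension equal to
its rank, which the trace shows to be `f`. In this Gram representation squared distances of
distinct vertices depend only on adjacency, and since `s < -1` adjacent vertices are the
strictly closer ones; rescaling makes their distance `1`.
-/

open Matrix

section RankAndGram

variable {n : Type*} [Fintype n]

theorem rank_smul_of_ne_zero {m K : Type*} [Field K] {a : K} (ha : a ≠ 0) (M : Matrix m n K) :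
    (a • M).rank = M.rank := by
  have h_lin : (a • M).mulVecLin = a • M.mulVecLin := LinearMap.ext fun x => smul_mulVec a M x
  rw [Matrix.rank, Matrix.rank, h_lin, LinearMap.range_smul _ _ ha]

theorem trace_eq_rank_of_isIdempotentElem {K : Type*} [Field K] {P : Matrix n n K}
    (hP : IsIdempotentElem P) : P.trace = P.rank := by
  have hP_lin : IsIdempotentElem (toLin' P) := by
    rw [IsIdempotentElem, Module.End.mul_eq_comp, ← toLin'_mul, hP.eq]
  rw [← trace_toLin'_eq, (LinearMap.IsIdempotentElem.isProj_range _ hP_lin).trace]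
  rfl

theorem trace_eq_mul_rank_of_mul_self_eq_smul {K : Type*} [Field K] {M : Matrix n n K} {d : K}
    (hd : d ≠ 0) (hM : M * M = d • M) : M.trace = d * M.rank := by
  have hP : IsIdempotentElem (d⁻¹ • M) := by
    rw [IsIdempotentElem, smul_mul_smul_comm, hM, smul_smul, inv_mul_cancel_right₀ hd]
  rw [← rank_smul_of_ne_zero (inv_ne_zero hd) M, ← trace_eq_rank_of_isIdempotentElem hP,
    trace_smul, smul_eq_mul, mul_inv_cancel_left₀ hd]

open scoped ComplexOrder in
theorem posSemidef_of_mul_self_eq_smul {𝕜 : Type*} [RCLike 𝕜] {M : Matrix n n 𝕜} {d : 𝕜}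
    (hd : 0 < d) (hM : M.IsHermitian) (hMM : M * M = d • M) : M.PosSemidef := by
  have hM_eq : M = d⁻¹ • (Mᴴ * M) := by rw [hM.eq, hMM, inv_smul_smul₀ hd.ne']
  rw [hM_eq]
  exact (posSemidef_conjTranspose_mul_self M).smul (inv_nonneg.mpr hd.le)

open scoped ComplexOrder MatrixOrder Matrix.Norms.L2Operator in
theorem exists_gram_eq_of_posSemidef {𝕜 : Type*} [RCLike 𝕜] {M : Matrix n n 𝕜}
    (hM : M.PosSemidef) : ∃ φ : n → EuclideanSpace 𝕜 (Fin M.rank), gram 𝕜 φ = M := by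
  obtain ⟨B, hB⟩ := CStarAlgebra.nonneg_iff_eq_star_mul_self.mp hM.nonneg
  let T := toEuclideanLin B
  have h_rank : Module.finrank 𝕜 T.range = M.rank := by
    rw [hB, star_eq_conjTranspose, rank_conjTranspose_mul_self,
      B.rank_eq_finrank_range_toLin (EuclideanSpace.basisFun n 𝕜).toBasis
        (EuclideanSpace.basisFun n 𝕜).toBasis, ← toEuclideanLin_eq_toLin_orthonormal]
  let e := ((stdOrthonormalBasis 𝕜 T.range).reindex (finCongr h_rank)).repr
  refine ⟨fun i => e (T.rangeRestrict (EuclideanSpace.single i 1)), ?_⟩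
  ext i j
  rw [gram_apply, e.inner_map_map, hB, Submodule.coe_inner]
  simp [T, toLpLin_apply, mul_apply, PiLp.inner_apply, mul_comm]

theorem dist_sq_eq_gram {ι E : Type*} [SeminormedAddCommGroup E] [InnerProductSpace ℝ E]
    (x : ι → E) (i j : ι) :
    dist (x i) (x j) ^ 2 = gram ℝ x i i + gram ℝ x j j - 2 * gram ℝ x i j := by
  simp only [dist_eq_norm, norm_sub_sq_real, gram_apply, real_inner_self_eq_norm_sq]
  ring

end RankAndGram

/-- `r` and `s` are the restricted eigenvalues of the strongly regular parameters `(k, ℓ, μ)`, that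
is, the two roots of `X ^ 2 - (ℓ - μ) * X - (k - μ)`, encoded by Vieta's formulas. -/
structure IsRestrictedEigenvalues {K : Type*} [CommRing K] (k ℓ μ r s : K) : Prop where
  add_eq : r + s = ℓ - μ
  mul_eq : r * s = μ - k

namespace IsRestrictedEigenvalues

theorem of_sqrt {k ℓ μ : ℝ} (h : 0 ≤ (ℓ - μ) ^ 2 + 4 * (k - μ)) :
    IsRestrictedEigenvalues k ℓ μ ((ℓ - μ + √((ℓ - μ) ^ 2 + 4 * (k - μ))) / 2)
      ((ℓ - μ - √((ℓ - μ) ^ 2 + 4 * (k - μ))) / 2) where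
  add_eq := by ring
  mul_eq := by linear_combination -(Real.sq_sqrt h) / 4

theorem neg_one_between {K : Type*} [CommRing K] [LinearOrder K] [IsStrictOrderedRing K]
    {k ℓ μ r s : K} (h : IsRestrictedEigenvalues k ℓ μ r s) (hsr : s ≤ r) (hℓk : ℓ + 1 < k) :
    s < -1 ∧ -1 < r := by
  have h_prod : (1 + r) * (1 + s) < 0 := by
    linear_combination h.add_eq + h.mul_eq + hℓk
  rcases mul_neg_iff.mp h_prod with ⟨hr, hs⟩ | ⟨hr, hs⟩
  · constructor <;> linarith
  · linarith

end IsRestrictedEigenvalues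

section StronglyRegular

variable {V R : Type*} [Fintype V] [CommRing R]
  {G : SimpleGraph V} [DecidableRel G.Adj] {v k ℓ μ : ℕ} {r s : R}

/-- A common neighbour `x` of two non-adjacent vertices `u`, `w` has as neighbours `u`, `w` and the
`ℓ` common neighbours of `x` and `u`. -/
theorem srg_add_one_lt_degree (hG : G.IsSRGWith v k ℓ μ) (hG_ne : G ≠ ⊤) (hμ : 0 < μ) :
    ℓ + 1 < k := by
  classical
  obtain ⟨u, w, huw, h_not_adj⟩ := SimpleGraph.ne_top_iff_exists_not_adj.mp hG_ne
  obtain ⟨x, hux, hwx⟩ : (G.commonNeighbors u w).Nonempty := by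
    rw [← Set.nonempty_coe_sort, ← Fintype.card_pos_iff, hG.of_not_adj huw h_not_adj]
    exact hμ
  have hu : u ∉ (G.commonNeighbors x u).toFinset := by simp [SimpleGraph.mem_commonNeighbors]
  have hw : w ∉ insert u (G.commonNeighbors x u).toFinset := by
    simp [SimpleGraph.mem_commonNeighbors, huw.symm, h_not_adj]
  have h_subset : insert w (insert u (G.commonNeighbors x u).toFinset) ⊆ G.neighborFinset x := by
    intro y
    simp only [Finset.mem_insert, Set.mem_toFinset, SimpleGraph.mem_commonNeighbors,
      SimpleGraph.mem_neighborFinset]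
    rintro (rfl | rfl | ⟨hxy, -⟩)
    exacts [hwx.symm, hux.symm, hxy]
  have h_card := Finset.card_le_card h_subset
  rw [Finset.card_insert_of_notMem hw, Finset.card_insert_of_notMem hu, Set.toFinset_card,
    hG.of_adj x u hux.symm, SimpleGraph.card_neighborFinset_eq_degree, hG.regular x] at h_card
  exact h_card

theorem adjMatrix_sub_mul_of_one [DecidableEq V] (hG : G.IsRegularOfDegree k) (t : R) :
    (G.adjMatrix R - t • 1) * of 1 = ((k : R) - t) • of 1 := by
  ext i j
  simp [sub_mul, hG i]

theorem of_one_mul_adjMatrix_sub [DecidableEq V] (hG : G.IsRegularOfDegree k) (t : R) :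
    of 1 * (G.adjMatrix R - t • 1) = ((k : R) - t) • of 1 := by
  ext i j
  simp [mul_sub, hG j]

theorem of_one_mul_of_one :
    (of 1 * of 1 : Matrix V V R) = (Fintype.card V : R) • of 1 := by
  ext i j
  simp [mul_apply]

theorem adjMatrix_sub_mul_adjMatrix_sub [DecidableEq V] (hG : G.IsSRGWith v k ℓ μ)
    (hrs : IsRestrictedEigenvalues (k : R) ℓ μ r s) :
    (G.adjMatrix R - r • 1) * (G.adjMatrix R - s • 1) = (μ : R) • of 1 := by
  have h_expand : (G.adjMatrix R - r • 1) * (G.adjMatrix R - s • 1) =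
      G.adjMatrix R ^ 2 - (r + s) • G.adjMatrix R + (r * s) • 1 := by
    simp only [sub_mul, mul_sub, smul_mul_assoc, mul_smul_comm, mul_one, one_mul, sq]
    module
  have h_compl : Gᶜ.adjMatrix R = of 1 - 1 - G.adjMatrix R := by
    rw [← G.one_add_adjMatrix_add_compl_adjMatrix_eq_of_one R,
      G.compl_adjMatrix_eq_adjMatrix_compl R]
    abel
  rw [h_expand, hG.matrix_eq, h_compl, hrs.add_eq, hrs.mul_eq]
  module

/-- Evaluate `(A - r) * (A - s) = μ J` at the all-ones vector. -/
theorem degree_sub_mul_degree_sub [Nonempty V] (hG : G.IsSRGWith v k ℓ μ)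
    (hrs : IsRestrictedEigenvalues (k : R) ℓ μ r s) :
    ((k : R) - r) * (k - s) = μ * Fintype.card V := by
  classical
  have h_ones : (((k : R) - r) * (k - s)) • (of 1 : Matrix V V R) =
      ((μ : R) * Fintype.card V) • of 1 := calc
    _ = (G.adjMatrix R - r • 1) * (G.adjMatrix R - s • 1) * of 1 := by
      rw [mul_assoc, adjMatrix_sub_mul_of_one hG.regular, mul_smul_comm,
        adjMatrix_sub_mul_of_one hG.regular, smul_smul, mul_comm]
    _ = _ := by
      rw [adjMatrix_sub_mul_adjMatrix_sub hG hrs, smul_mul_assoc, of_one_mul_of_one, smul_smul]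
  obtain ⟨u⟩ := ‹Nonempty V›
  simpa using congrFun₂ h_ones u u

end StronglyRegular

section Deflation

variable {V K : Type*} [Fintype V] [DecidableEq V] [Field K]
  {G : SimpleGraph V} [DecidableRel G.Adj] {v k ℓ μ : ℕ} {r s : K}

variable (G k s) in
/-- The shifted adjacency matrix `A - s` of a `k`-regular graph with the eigenvalue `k - s` of the
all-ones vector deflated to `0`. For a restricted eigenvalue `s` of a strongly regular
graph it is a multiple of the projection onto the other restricted eigenspace. -/
def deflatedAdjMatrix : Matrix V V K :=
  G.adjMatrix K - s • 1 - ((k - s) / Fintype.card V : K) • of 1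

theorem isSymm_deflatedAdjMatrix : (deflatedAdjMatrix G k s).IsSymm := by
  ext i j
  simp [deflatedAdjMatrix, one_apply, G.adj_comm, eq_comm]

theorem trace_deflatedAdjMatrix [Nonempty V] [CharZero K] :
    (deflatedAdjMatrix G k s).trace = -s * (Fintype.card V - 1) - k := by
  have h_trace_of_one : (of 1 : Matrix V V K).trace = Fintype.card V := by simp [trace]
  simp only [deflatedAdjMatrix, trace_sub, trace_smul, SimpleGraph.trace_adjMatrix, trace_one,
    h_trace_of_one, smul_eq_mul]
  field_simp
  ring

theorem deflatedAdjMatrix_apply_self_add_sub {u w : V} (huw : u ≠ w) :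
    deflatedAdjMatrix G k s u u + deflatedAdjMatrix G k s w w - 2 * deflatedAdjMatrix G k s u w =
      -2 * (s + G.adjMatrix K u w) := by
  simp only [deflatedAdjMatrix, Matrix.sub_apply, Matrix.smul_apply, SimpleGraph.adjMatrix_apply,
    SimpleGraph.irrefl, if_false, one_apply_eq, one_apply_ne huw, of_apply, Pi.one_apply,
    smul_eq_mul]
  ring

theorem deflatedAdjMatrix_mul_self [Nonempty V] [CharZero K] (hG : G.IsSRGWith v k ℓ μ)
    (hrs : IsRestrictedEigenvalues (k : K) ℓ μ r s) :
    deflatedAdjMatrix G k s * deflatedAdjMatrix G k s = (r - s) • deflatedAdjMatrix G k s := by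
  set S : Matrix V V K := G.adjMatrix K - s • 1 with hS
  set c : K := (k - s) / Fintype.card V with hc
  have hSS : S * S = (r - s) • S + (μ : K) • of 1 := by
    rw [← adjMatrix_sub_mul_adjMatrix_sub hG hrs]
    simp only [hS, sub_mul, mul_sub, smul_mul_assoc, mul_smul_comm, mul_one, one_mul]
    module
  have hSJ : S * of 1 = ((k : K) - s) • of 1 := adjMatrix_sub_mul_of_one hG.regular s
  have hJS : of 1 * S = ((k : K) - s) • of 1 := of_one_mul_adjMatrix_sub hG.regular s
  have hc_card : c * Fintype.card V = k - s := by rw [hc]; field_simp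
  have hcμ : c * (k - r) = μ := by
    rw [hc, div_mul_eq_mul_div, mul_comm, degree_sub_mul_degree_sub hG hrs]
    field_simp
  calc (S - c • of 1) * (S - c • of 1)
      = (r - s) • S + (μ - 2 * c * (k - s) + c * (c * Fintype.card V)) • of 1 := by
        simp only [sub_mul, mul_sub, smul_mul_assoc, mul_smul_comm, hSS, hSJ, hJS,
          of_one_mul_of_one]
        module
    _ = (r - s) • (S - c • of 1) := by
        rw [hc_card, ← hcμ]
        module

theorem rank_deflatedAdjMatrix [Nonempty V] [CharZero K] (hG : G.IsSRGWith v k ℓ μ)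
    (hrs : IsRestrictedEigenvalues (k : K) ℓ μ r s) (hne : r ≠ s) :
    ((deflatedAdjMatrix G k s).rank : K) =
      (v - 1 + ((v - 1) * (μ - ℓ) - 2 * k) / (r - s)) / 2 := by
  have h_sub : r - s ≠ 0 := sub_ne_zero.mpr hne
  have h_trace := trace_eq_mul_rank_of_mul_self_eq_smul h_sub (deflatedAdjMatrix_mul_self hG hrs)
  rw [trace_deflatedAdjMatrix, hG.card] at h_trace
  field_simp
  linear_combination -2 * h_trace - ((v : K) - 1) * hrs.add_eq

end Deflation

section Packing

theorem one_le_dist_and_dist_eq_one_iff {V X : Type*} [PseudoMetricSpace X] {G : SimpleGraph V}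
    [DecidableRel G.Adj] {s : ℝ} (hs : s < -1) {ψ : V → X} {u w : V}
    (hψ : dist (ψ u) (ψ w) ^ 2 = (s + G.adjMatrix ℝ u w) / (s + 1)) :
    1 ≤ dist (ψ u) (ψ w) ∧ (dist (ψ u) (ψ w) = 1 ↔ G.Adj u w) := by
  by_cases h_adj : G.Adj u w
  · have h_dist : dist (ψ u) (ψ w) = 1 := by
      rw [← sq_eq_sq₀ dist_nonneg zero_le_one, hψ, SimpleGraph.adjMatrix_apply, if_pos h_adj,
        one_pow, div_self (by linarith)]
    simp [h_dist, h_adj]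
  · have h_dist : 1 < dist (ψ u) (ψ w) := by
      rw [← one_lt_sq_iff₀ dist_nonneg, hψ, SimpleGraph.adjMatrix_apply, if_neg h_adj,
        one_lt_div_of_neg (by linarith)]
      linarith
    exact ⟨h_dist.le, iff_of_false h_dist.ne' h_adj⟩

variable {V : Type*} [Fintype V] [DecidableEq V] {G : SimpleGraph V} [DecidableRel G.Adj]
  {v k ℓ μ : ℕ} {r s : ℝ}

theorem exists_dist_sq_eq_div [Nonempty V] (hG : G.IsSRGWith v k ℓ μ)
    (hrs : IsRestrictedEigenvalues (k : ℝ) ℓ μ r s) (hsr : s < r) (hs : s < -1) :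
    ∃ ψ : V → EuclideanSpace ℝ (Fin (deflatedAdjMatrix G k s).rank),
      ∀ u w, u ≠ w → dist (ψ u) (ψ w) ^ 2 = (s + G.adjMatrix ℝ u w) / (s + 1) := by
  set B := deflatedAdjMatrix G k s
  have hB_psd : B.PosSemidef := posSemidef_of_mul_self_eq_smul (sub_pos.mpr hsr)
    (by rw [IsHermitian, conjTranspose_eq_transpose_of_trivial, isSymm_deflatedAdjMatrix.eq])
    (deflatedAdjMatrix_mul_self hG hrs)
  have ha : 0 < (-2 * (s + 1))⁻¹ := inv_pos.mpr (by linarith)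
  obtain ⟨ψ, hψ⟩ : ∃ ψ : V → EuclideanSpace ℝ (Fin B.rank), gram ℝ ψ = (-2 * (s + 1))⁻¹ • B :=
    rank_smul_of_ne_zero ha.ne' B ▸ exists_gram_eq_of_posSemidef (hB_psd.smul ha.le)
  refine ⟨ψ, fun u w huw => ?_⟩
  have hs_ne : s + 1 ≠ 0 := by linarith
  calc dist (ψ u) (ψ w) ^ 2 = (-2 * (s + 1))⁻¹ * (B u u + B w w - 2 * B u w) := by
        rw [dist_sq_eq_gram, hψ]
        simp only [Matrix.smul_apply, smul_eq_mul]
        ring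
    _ = (s + G.adjMatrix ℝ u w) / (s + 1) := by
        rw [deflatedAdjMatrix_apply_self_add_sub huw]
        field_simp

theorem exists_unit_ball_packing [Nonempty V] (hG : G.IsSRGWith v k ℓ μ)
    (hrs : IsRestrictedEigenvalues (k : ℝ) ℓ μ r s) (hsr : s < r) (hs : s < -1) :
    ∃ ψ : V → EuclideanSpace ℝ (Fin (deflatedAdjMatrix G k s).rank),
      Function.Injective ψ ∧
      (∀ u w : V, u ≠ w → 1 ≤ dist (ψ u) (ψ w)) ∧
      (∀ u w : V, u ≠ w → (dist (ψ u) (ψ w) = 1 ↔ G.Adj u w)) := by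
  obtain ⟨ψ, hψ⟩ := exists_dist_sq_eq_div hG hrs hsr hs
  have h_dist u w (huw : u ≠ w) := one_le_dist_and_dist_eq_one_iff hs (hψ u w huw)
  refine ⟨ψ, fun u w h_eq => ?_, fun u w huw => (h_dist u w huw).1,
    fun u w huw => (h_dist u w huw).2⟩
  by_contra huw
  have h_one_le := (h_dist u w huw).1
  rw [h_eq, dist_self] at h_one_le
  exact zero_lt_one.not_ge h_one_le

end Packing

/-- A connected non-complete strongly regular graph with parameters
`(v, k, λ, μ)`, `μ > 0`, is the tangency graph of a unit ball packing in
dimension `f = (v-1+Δ)/2`: there is an injective map `ψ` of its vertices into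
`EuclideanSpace ℝ (Fin f)` with pairwise distances at least `1`, with distance
exactly `1` precisely on adjacent pairs. -/
theorem srg_unit_ball_packing {V : Type*} [Fintype V]
    (G : SimpleGraph V) (v k ℓ μ : ℕ)
    (hSRG : G.IsSRGWith v k ℓ μ) (hconn : G.Connected) (hnc : G ≠ ⊤) (hμ : 0 < μ)
    (δ r Δ : ℝ) (f : ℕ)
    (hδ : δ = Real.sqrt (((ℓ : ℝ) - μ) ^ 2 + 4 * ((k : ℝ) - μ)))
    (hr : r = (((ℓ : ℝ) - μ) + δ) / 2)
    (hΔ : Δ = (((v : ℝ) - 1) * ((μ : ℝ) - ℓ) - 2 * k) / δ)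
    (hf : (f : ℝ) = ((v : ℝ) - 1 + Δ) / 2) :
    ∃ ψ : V → EuclideanSpace ℝ (Fin f),
      Function.Injective ψ ∧
      (∀ u w : V, u ≠ w → 1 ≤ dist (ψ u) (ψ w)) ∧
      (∀ u w : V, u ≠ w → (dist (ψ u) (ψ w) = 1 ↔ G.Adj u w)) := by
  have := hconn.nonempty
  have hℓk : (ℓ : ℝ) + 1 < k := by exact_mod_cast srg_add_one_lt_degree hSRG hnc hμ
  have h_discr : (0 : ℝ) ≤ (ℓ - μ) ^ 2 + 4 * (k - μ) := by
    linear_combination sq_nonneg ((ℓ : ℝ) - μ + 2) + 4 * hℓk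
  obtain ⟨s, hs⟩ : ∃ s : ℝ, s = (ℓ - μ - δ) / 2 := ⟨_, rfl⟩
  have hrs : IsRestrictedEigenvalues (k : ℝ) ℓ μ r s := by
    rw [hr, hs, hδ]
    exact .of_sqrt h_discr
  have hδ_eq : δ = r - s := by rw [hr, hs]; ring
  have hδ_nonneg : 0 ≤ δ := hδ ▸ Real.sqrt_nonneg _
  obtain ⟨hs_lt, hr_gt⟩ := hrs.neg_one_between (by linarith) hℓk
  have hsr : s < r := hs_lt.trans hr_gt
  obtain rfl : f = (deflatedAdjMatrix G k s).rank := by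
    rw [← Nat.cast_inj (R := ℝ), rank_deflatedAdjMatrix hSRG hrs hsr.ne', hf, hΔ, hδ_eq]
  exact exists_unit_ball_packing hSRG hrs hsr hs_lt
end
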